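/- For q ≥ 1, a Dirichlet character χ mod q, and t ≥ 0, the number of zeros ρ = β+iγ of L(s,χ) with 0 < β < 1 and t < γ ≤ t+1 is O(log(q(t+2))). Consequently, for any T₀ ≥ 0 there exists t ∈ (T₀, T₀+1] with min over zeros γ of |t − γ| ≫ 1/log(q(t+2)). -/

import Mathlib

open Complex Set

namespace ZD

/-- second-difference (midpoint) error term -/
noncomputable def hh (q m : ℕ) (s : ℂ) : ℂ :=
  (s - 1) * ((m + 1 + q : ℝ) : ℂ) ^ (-s) +
    (1 / (q : ℂ)) * (((m + 1 + q + q / 2 : ℝ) : ℂ) ^ (1 - s) - ((m + 1 + q / 2 : ℝ) : ℂ) ^ (1 - s))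

/-- analytic continuation of `(s-1) L(s,χ)` to `Re s > -1/2` -/
noncomputable def FF {q : ℕ} (χ : DirichletCharacter ℂ q) (s : ℂ) : ℂ :=
  (s - 1) * ∑ k ∈ Finset.range q, χ ((k + 1 : ℕ) : ZMod q) * ((k + 1 : ℝ) : ℂ) ^ (-s) +
  (1 / (q : ℂ)) * ∑ k ∈ Finset.range q, χ ((k + 1 : ℕ) : ZMod q) *
      ((k + 1 + q / 2 : ℝ) : ℂ) ^ (1 - s) +
  ∑' m : ℕ, χ ((m + 1 : ℕ) : ZMod q) * hh q m s

lemma hasDerivAt_pow (x : ℝ) (hx : 0 < x) (w : ℂ) :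
    HasDerivAt (fun y : ℝ => (y : ℂ) ^ w) (w * (x : ℂ) ^ (w - 1)) x := by
  have h := (hasDerivAt_id (x : ℂ)).cpow_const (c := w) (Or.inl (by simpa using hx))
  simpa using h.comp_ofReal

lemma midpoint_bound (n a K : ℝ) (ha : 0 ≤ a) (g g1 g2 g3 : ℝ → ℂ)
    (h0 : ∀ x ∈ Icc (n - a) (n + a), HasDerivAt g (g1 x) x)
    (h1 : ∀ x ∈ Icc (n - a) (n + a), HasDerivAt g1 (g2 x) x)
    (h2 : ∀ x ∈ Icc (n - a) (n + a), HasDerivAt g2 (g3 x) x)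
    (hK : ∀ x ∈ Icc (n - a) (n + a), ‖g3 x‖ ≤ K) :
    ‖g (n + a) - g (n - a) - 2 * a * g1 n‖ ≤ 2 * a ^ 3 * K := by
  have mp : ∀ u ∈ Icc 0 a, n + u ∈ Icc (n - a) (n + a) := fun u hu =>
    ⟨by linarith [hu.1, hu.2], by linarith [hu.1, hu.2]⟩
  have mm : ∀ u ∈ Icc 0 a, n - u ∈ Icc (n - a) (n + a) := fun u hu =>
    ⟨by linarith [hu.1, hu.2], by linarith [hu.1, hu.2]⟩
  have dp : ∀ (f : ℝ → ℂ) (f' : ℂ) (u : ℝ), HasDerivAt f f' (n + u) →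
      HasDerivAt (fun u => f (n + u)) f' u := fun f f' u h => h.comp_const_add n u
  have dm : ∀ (f : ℝ → ℂ) (f' : ℂ) (u : ℝ), HasDerivAt f f' (n - u) →
      HasDerivAt (fun u => f (n - u)) (-f') u := fun f f' u h => h.comp_const_sub n u
  have hK0 : 0 ≤ K := (norm_nonneg _).trans (hK n ⟨by linarith, by linarith⟩)
  have s2 : ∀ u ∈ Icc 0 a, ‖g2 (n + u) - g2 (n - u)‖ ≤ 2 * K * a := by
    intro u hu
    have := norm_image_sub_le_of_norm_deriv_le_segment' (a := 0) (b := a)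
      (f := fun u => g2 (n + u) - g2 (n - u)) (f' := fun u => g3 (n + u) - -g3 (n - u)) (C := 2 * K)
      (fun x hx => ((dp _ _ _ (h2 _ (mp x hx))).sub (dm _ _ _ (h2 _ (mm x hx)))).hasDerivWithinAt)
      (fun x hx => by
        have hx' := Ico_subset_Icc_self hx
        rw [sub_neg_eq_add]
        refine (norm_add_le _ _).trans ?_
        linarith [hK _ (mp x hx'), hK _ (mm x hx')]) u hu
    simp only [add_zero, sub_zero, sub_self] at this
    refine this.trans ?_
    have := hu.2
    gcongr
  have s1 : ∀ u ∈ Icc 0 a, ‖g1 (n + u) + g1 (n - u) - 2 * g1 n‖ ≤ 2 * K * a * a := by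
    intro u hu
    have := norm_image_sub_le_of_norm_deriv_le_segment' (a := 0) (b := a)
      (f := fun u => g1 (n + u) + g1 (n - u)) (f' := fun u => g2 (n + u) + -g2 (n - u))
      (C := 2 * K * a)
      (fun x hx => ((dp _ _ _ (h1 _ (mp x hx))).add (dm _ _ _ (h1 _ (mm x hx)))).hasDerivWithinAt)
      (fun x hx => by
        have hx' := Ico_subset_Icc_self hx
        rw [← sub_eq_add_neg]
        exact s2 x hx') u hu
    simp only [add_zero, sub_zero, ← two_mul] at this
    refine this.trans ?_
    have := hu.2
    gcongr
  have s0 := norm_image_sub_le_of_norm_deriv_le_segment' (a := 0) (b := a)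
      (f := fun u => g (n + u) - g (n - u) - (u : ℂ) * (2 * g1 n))
      (f' := fun u => g1 (n + u) - -g1 (n - u) - 1 * (2 * g1 n))
      (C := 2 * K * a * a)
      (fun x hx => (((dp _ _ _ (h0 _ (mp x hx))).sub (dm _ _ _ (h0 _ (mm x hx)))).sub
        ((hasDerivAt_id x).ofReal_comp.mul_const _)).hasDerivWithinAt)
      (fun x hx => by
        have hx' := Ico_subset_Icc_self hx
        rw [sub_neg_eq_add, one_mul]
        exact s1 x hx') a (right_mem_Icc.2 ha)
  simp only [add_zero, sub_zero, sub_self, ofReal_zero, zero_mul] at s0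
  calc _ = ‖g (n + a) - g (n - a) - (a : ℂ) * (2 * g1 n)‖ := by congr 1; ring
    _ ≤ _ := s0
    _ = _ := by ring

lemma hh_bound (q m : ℕ) (hq : 1 ≤ q) (s : ℂ) (hs : -1 / 2 < s.re) :
    ‖hh q m s‖ ≤ (q : ℝ) ^ 2 * (‖s‖ + 1) ^ 3 * (m + 1 : ℝ) ^ (-(3 / 2) : ℝ) := by
  have hq' : (1 : ℝ) ≤ q := by exact_mod_cast hq
  have hm : (0 : ℝ) ≤ m := Nat.cast_nonneg m
  have key := midpoint_bound (m + 1 + q) (q / 2)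
    ((‖s‖ + 1) ^ 3 * (m + 1 : ℝ) ^ (-(3 / 2) : ℝ)) (by positivity)
    (fun x => (x : ℂ) ^ (1 - s)) (fun x => (1 - s) * (x : ℂ) ^ (1 - s - 1))
    (fun x => (1 - s) * ((1 - s - 1) * (x : ℂ) ^ (1 - s - 1 - 1)))
    (fun x => (1 - s) * ((1 - s - 1) * ((1 - s - 1 - 1) * (x : ℂ) ^ (1 - s - 1 - 1 - 1))))
    (fun x hx => hasDerivAt_pow x (by linarith [hx.1]) _)
    (fun x hx => (hasDerivAt_pow x (by linarith [hx.1]) _).const_mul _)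
    (fun x hx => ((hasDerivAt_pow x (by linarith [hx.1]) _).const_mul _).const_mul _)
    (fun x hx => by
      have hx1 : (m : ℝ) + 1 ≤ x := by linarith [hx.1]
      have hx0 : 0 < x := by linarith
      have e : ‖(x : ℂ) ^ (1 - s - 1 - 1 - 1)‖ ≤ (m + 1 : ℝ) ^ (-(3 / 2) : ℝ) := by
        rw [norm_cpow_eq_rpow_re_of_pos hx0]
        calc x ^ (1 - s - 1 - 1 - 1).re ≤ x ^ (-(3 / 2) : ℝ) := by
              apply Real.rpow_le_rpow_of_exponent_le (by linarith)
              simp only [sub_re, one_re]; linarith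
          _ ≤ _ := Real.rpow_le_rpow_of_nonpos (by positivity) hx1 (by norm_num)
      have n1 : ‖1 - s‖ ≤ ‖s‖ + 1 := by
        have := norm_sub_le (1 : ℂ) s; simp at this; linarith
      have n2 : ‖1 - s - 1‖ ≤ ‖s‖ + 1 := by
        rw [show 1 - s - 1 = -s by ring, norm_neg]; linarith
      have n3 : ‖1 - s - 1 - 1‖ ≤ ‖s‖ + 1 := by
        rw [show 1 - s - 1 - 1 = -(s + 1) by ring, norm_neg]
        simpa using norm_add_le s 1
      rw [norm_mul, norm_mul, norm_mul]
      calc _ ≤ (‖s‖ + 1) * ((‖s‖ + 1) * ((‖s‖ + 1) * (m + 1 : ℝ) ^ (-(3 / 2) : ℝ))) := by gcongr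
        _ = _ := by ring)
  have e : hh q m s = (1 / (q : ℂ)) * ((((m + 1 + q + q / 2 : ℝ) : ℂ) ^ (1 - s) -
      ((m + 1 + q - q / 2 : ℝ) : ℂ) ^ (1 - s)) - 2 * ((q / 2 : ℝ) : ℂ) *
        ((1 - s) * ((m + 1 + q : ℝ) : ℂ) ^ (1 - s - 1))) := by
    have hqc : (q : ℂ) ≠ 0 := by exact_mod_cast (by omega : q ≠ 0)
    rw [hh, show (m + 1 + q - q / 2 : ℝ) = m + 1 + q / 2 by ring, show 1 - s - 1 = -s by ring]
    push_cast
    field_simp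
    ring
  rw [e, norm_mul]
  have : ‖(1 / (q : ℂ))‖ = 1 / q := by simp
  rw [this]
  set K := (‖s‖ + 1) ^ 3 * (m + 1 : ℝ) ^ (-(3 / 2) : ℝ) with hKdef
  have hK : 0 ≤ K := by positivity
  calc _ ≤ 1 / (q : ℝ) * (2 * (q / 2 : ℝ) ^ 3 * K) := by gcongr
    _ = (q : ℝ) ^ 2 * K / 4 := by field_simp; ring
    _ ≤ (q : ℝ) ^ 2 * K := by nlinarith [mul_nonneg (sq_nonneg (q : ℝ)) hK]
    _ = _ := by rw [hKdef]; ring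

lemma summ32 : Summable (fun m : ℕ => (m + 1 : ℝ) ^ (-(3 / 2) : ℝ)) := by
  have := (summable_nat_add_iff 1).2 (Real.summable_nat_rpow.2 (by norm_num : (-(3 / 2) : ℝ) < -1))
  simpa using this

lemma norm_chi_hh {q : ℕ} (χ : DirichletCharacter ℂ q) (m : ℕ) (hq : 1 ≤ q) (s : ℂ)
    (hs : -1 / 2 < s.re) :
    ‖χ ((m + 1 : ℕ) : ZMod q) * hh q m s‖ ≤
      (q : ℝ) ^ 2 * (‖s‖ + 1) ^ 3 * (m + 1 : ℝ) ^ (-(3 / 2) : ℝ) := by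
  rw [norm_mul]
  calc _ ≤ 1 * ‖hh q m s‖ := by gcongr; exact χ.norm_le_one _
    _ ≤ _ := by rw [one_mul]; exact hh_bound q m hq s hs

lemma diff_cpow (x : ℝ) (hx : 0 < x) (f : ℂ → ℂ) (hf : Differentiable ℂ f) :
    Differentiable ℂ (fun s => (x : ℂ) ^ (f s)) := by
  intro s
  exact (hf s).const_cpow (Or.inl (by exact_mod_cast hx.ne'))

lemma FF_diff {q : ℕ} (hq : 1 ≤ q) (χ : DirichletCharacter ℂ q) :
    DifferentiableOn ℂ (FF χ) {s | -1 / 2 < s.re} := by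
  have hopen : IsOpen {s : ℂ | -1 / 2 < s.re} := isOpen_lt continuous_const continuous_re
  unfold FF
  refine DifferentiableOn.add (Differentiable.differentiableOn ?_) ?_
  · refine Differentiable.add (Differentiable.mul (by fun_prop) ?_)
      (Differentiable.const_mul ?_ _)
    · refine Differentiable.fun_sum fun k _ => Differentiable.const_mul ?_ _
      exact diff_cpow _ (by positivity) _ (by fun_prop)
    · refine Differentiable.fun_sum fun k _ => Differentiable.const_mul ?_ _
      exact diff_cpow _ (by positivity) _ (by fun_prop)
  · intro s hs
    have ho : IsOpen ({s : ℂ | -1 / 2 < s.re} ∩ Metric.ball 0 (‖s‖ + 1)) :=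
      hopen.inter Metric.isOpen_ball
    have hmem : s ∈ ({s : ℂ | -1 / 2 < s.re} ∩ Metric.ball 0 (‖s‖ + 1)) := ⟨hs, by simp⟩
    have := differentiableOn_tsum_of_summable_norm
      (F := fun (m : ℕ) s => χ ((m + 1 : ℕ) : ZMod q) * hh q m s)
      (u := fun m : ℕ => (q : ℝ) ^ 2 * ((‖s‖ + 1) + 1) ^ 3 * (m + 1 : ℝ) ^ (-(3 / 2) : ℝ))
      (summ32.mul_left _) (fun m => Differentiable.differentiableOn (by
        unfold hh
        refine Differentiable.const_mul ?_ _
        refine Differentiable.add (Differentiable.mul (by fun_prop) ?_)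
          (Differentiable.const_mul (Differentiable.sub ?_ ?_) _)
        all_goals exact diff_cpow _ (by positivity) _ (by fun_prop))) ho
      (fun m w hw => by
        refine (norm_chi_hh χ m hq w hw.1).trans ?_
        have : ‖w‖ ≤ ‖s‖ + 1 := (mem_ball_zero_iff.1 hw.2).le
        gcongr)
    exact (this.differentiableAt (ho.mem_nhds hmem)).differentiableWithinAt

lemma FF_bound : ∃ Z : ℝ, 1 ≤ Z ∧ ∀ (q : ℕ) (_ : 1 ≤ q) (χ : DirichletCharacter ℂ q) (s : ℂ)
    (_ : -1 / 2 < s.re), ‖FF χ s‖ ≤ Z * ((q : ℝ) * (‖s‖ + 1)) ^ 3 := by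
  refine ⟨(∑' m : ℕ, (m + 1 : ℝ) ^ (-(3 / 2) : ℝ)) + 5, ?_, ?_⟩
  · have : 0 ≤ ∑' m : ℕ, (m + 1 : ℝ) ^ (-(3 / 2) : ℝ) := tsum_nonneg fun m => by positivity
    linarith
  intro q hq χ s hs
  have hq' : (1 : ℝ) ≤ q := by exact_mod_cast hq
  have hA : 1 ≤ ‖s‖ + 1 := by linarith [norm_nonneg s]
  have b1 : ‖∑ k ∈ Finset.range q, χ ((k + 1 : ℕ) : ZMod q) * ((k + 1 : ℝ) : ℂ) ^ (-s)‖ ≤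
      q * q := by
    refine (norm_sum_le _ _).trans ((Finset.sum_le_card_nsmul _ _ (q : ℝ) ?_).trans (by simp))
    intro k hk
    have hk' : (k : ℝ) + 1 ≤ q := by exact_mod_cast Finset.mem_range.1 hk
    rw [norm_mul, norm_cpow_eq_rpow_re_of_pos (by positivity)]
    calc _ ≤ 1 * ((k : ℝ) + 1) ^ (1 : ℝ) := by
          gcongr
          · exact χ.norm_le_one _
          · linarith [(Nat.cast_nonneg k : (0 : ℝ) ≤ k)]
          · simp only [neg_re]; linarith
      _ ≤ q := by simpa using hk'
  have b2 : ‖∑ k ∈ Finset.range q, χ ((k + 1 : ℕ) : ZMod q) *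
      ((k + 1 + q / 2 : ℝ) : ℂ) ^ (1 - s)‖ ≤ q * (2 * q) ^ 2 := by
    refine (norm_sum_le _ _).trans
      ((Finset.sum_le_card_nsmul _ _ ((2 * q : ℝ) ^ 2) ?_).trans (by simp))
    intro k hk
    have hk' : (k : ℝ) + 1 ≤ q := by exact_mod_cast Finset.mem_range.1 hk
    rw [norm_mul, norm_cpow_eq_rpow_re_of_pos (by positivity)]
    calc _ ≤ 1 * ((k : ℝ) + 1 + q / 2) ^ (2 : ℝ) := by
          gcongr
          · exact χ.norm_le_one _
          · linarith [(Nat.cast_nonneg k : (0 : ℝ) ≤ k)]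
          · simp only [sub_re, one_re]; linarith
      _ ≤ (2 * q : ℝ) ^ 2 := by
          rw [one_mul, Real.rpow_two]; gcongr; linarith
  have b3 : ‖∑' m : ℕ, χ ((m + 1 : ℕ) : ZMod q) * hh q m s‖ ≤
      (q : ℝ) ^ 2 * (‖s‖ + 1) ^ 3 * ∑' m : ℕ, (m + 1 : ℝ) ^ (-(3 / 2) : ℝ) :=
    tsum_of_norm_bounded (summ32.hasSum.mul_left _) (fun m => norm_chi_hh χ m hq s hs)
  have n1 : ‖s - 1‖ ≤ ‖s‖ + 1 := by simpa using norm_sub_le s 1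
  set S := ∑' m : ℕ, (m + 1 : ℝ) ^ (-(3 / 2) : ℝ)
  have hS : 0 ≤ S := tsum_nonneg fun m => by positivity
  set A := ‖s‖ + 1
  have hA0 : 0 ≤ A := by linarith
  have hAA : A ≤ A ^ 3 := le_self_pow₀ hA (by norm_num)
  have hA3 : 1 ≤ A ^ 3 := one_le_pow₀ hA
  have hqq : (q : ℝ) ^ 2 ≤ q ^ 3 := pow_le_pow_right₀ hq' (by norm_num)
  unfold FF
  refine (norm_add₃_le).trans ?_
  rw [norm_mul, norm_mul]
  have hqn : ‖(1 / (q : ℂ))‖ = 1 / q := by simp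
  rw [hqn]
  calc _ ≤ A * (q * q) + 1 / q * (q * (2 * q) ^ 2) + (q : ℝ) ^ 2 * A ^ 3 * S := by gcongr
    _ = (q : ℝ) ^ 2 * (A + 4 + A ^ 3 * S) := by field_simp; ring
    _ ≤ (q : ℝ) ^ 3 * (A ^ 3 + 4 * A ^ 3 + A ^ 3 * S) := by gcongr; linarith
    _ = _ := by ring

end ZD

namespace ZD

lemma summ_shift {q : ℕ} (χ : DirichletCharacter ℂ q) (a : ℝ) (ha : 0 ≤ a) (w : ℂ)
    (hw : w.re < -1) :
    Summable (fun k : ℕ => χ ((k + 1 : ℕ) : ZMod q) * ((k + 1 + a : ℝ) : ℂ) ^ w) := by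
  have h1 := (summable_nat_add_iff 1).2 (Real.summable_nat_rpow.2 hw)
  refine Summable.of_norm_bounded h1 fun k => ?_
  have hp : (0 : ℝ) < k + 1 := by positivity
  rw [norm_mul, norm_cpow_eq_rpow_re_of_pos (by positivity)]
  calc _ ≤ 1 * ((k : ℝ) + 1 + a) ^ w.re := by gcongr; exact χ.norm_le_one _
    _ ≤ _ := by
      rw [one_mul]; push_cast
      exact Real.rpow_le_rpow_of_nonpos hp (by linarith) (by linarith)

lemma L_eq {q : ℕ} [NeZero q] (χ : DirichletCharacter ℂ q) (s : ℂ) (hs : 1 < s.re) :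
    DirichletCharacter.LFunction χ s =
      ∑' k : ℕ, χ ((k + 1 : ℕ) : ZMod q) * ((k + 1 : ℝ) : ℂ) ^ (-s) := by
  rw [DirichletCharacter.LFunction_eq_LSeries χ hs, LSeries,
    (DirichletCharacter.LSeriesSummable_of_one_lt_re χ hs).tsum_eq_zero_add]
  simp only [LSeries.term_zero, zero_add]
  refine tsum_congr fun k => ?_
  rw [LSeries.term_of_ne_zero (by omega), cpow_neg, div_eq_mul_inv]
  push_cast; rfl

lemma FF_eq_right {q : ℕ} [NeZero q] (χ : DirichletCharacter ℂ q) (s : ℂ) (hs : 2 < s.re) :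
    FF χ s = (s - 1) * DirichletCharacter.LFunction χ s := by
  have per : ∀ m : ℕ, χ ((m + q + 1 : ℕ) : ZMod q) = χ ((m + 1 : ℕ) : ZMod q) := by
    intro m; congr 1; push_cast; simp
  have sA := summ_shift χ 0 le_rfl (-s) (by simp only [neg_re]; linarith)
  have sB := summ_shift χ (q / 2) (by positivity) (1 - s)
    (by simp only [sub_re, one_re]; linarith)
  simp only [add_zero] at sA
  have eA := sA.sum_add_tsum_nat_add q
  have eB := sB.sum_add_tsum_nat_add q
  have sA' := (summable_nat_add_iff q).2 sA
  have sB' := (summable_nat_add_iff q).2 sB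
  rw [L_eq χ s (by linarith), ← eA]
  have eh : ∑' m : ℕ, χ ((m + 1 : ℕ) : ZMod q) * hh q m s =
      (s - 1) * ∑' m : ℕ, χ ((m + q + 1 : ℕ) : ZMod q) * (((m + q : ℕ) + 1 : ℝ) : ℂ) ^ (-s) +
      (1 / (q : ℂ)) * (∑' m : ℕ, χ ((m + q + 1 : ℕ) : ZMod q) *
          (((m + q : ℕ) + 1 + q / 2 : ℝ) : ℂ) ^ (1 - s) -
        ∑' m : ℕ, χ ((m + 1 : ℕ) : ZMod q) * ((m + 1 + q / 2 : ℝ) : ℂ) ^ (1 - s)) := by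
    rw [← sB'.tsum_sub sB, ← tsum_mul_left, ← tsum_mul_left,
      ← (sA'.mul_left _).tsum_add ((sB'.sub sB).mul_left _)]
    refine tsum_congr fun m => ?_
    rw [per, hh, show (((m + q : ℕ) : ℝ) + 1 : ℝ) = m + 1 + q by push_cast; ring]
    ring
  unfold FF
  rw [eh, ← eB]
  ring

lemma exists_entire {q : ℕ} [NeZero q] (χ : DirichletCharacter ℂ q) :
    ∃ E : ℂ → ℂ, Differentiable ℂ E ∧
      ∀ s, s ≠ 1 → E s = (s - 1) * DirichletCharacter.LFunction χ s := by
  by_cases h : χ = 1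
  · subst h
    refine ⟨_, DirichletCharacter.differentiable_LFunctionTrivChar₁ q, fun s hs => ?_⟩
    simp [DirichletCharacter.LFunctionTrivChar₁, Function.update_of_ne hs,
      DirichletCharacter.LFunctionTrivChar]
  · exact ⟨_, (by fun_prop : Differentiable ℂ fun s : ℂ => s - 1).mul
      (DirichletCharacter.differentiable_LFunction h), fun s _ => rfl⟩

lemma FF_eq {q : ℕ} [NeZero q] (χ : DirichletCharacter ℂ q) (s : ℂ) (hs : -1 / 2 < s.re)
    (hs1 : s ≠ 1) : FF χ s = (s - 1) * DirichletCharacter.LFunction χ s := by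
  obtain ⟨E, hE, hE'⟩ := exists_entire χ
  rw [← hE' s hs1]
  have hopen : IsOpen {s : ℂ | -1 / 2 < s.re} := isOpen_lt continuous_const continuous_re
  refine AnalyticOnNhd.eqOn_of_preconnected_of_eventuallyEq (U := {s : ℂ | -1 / 2 < s.re})
    (z₀ := 3) ((FF_diff (NeZero.one_le) χ).analyticOnNhd hopen)
    (hE.differentiableOn.analyticOnNhd hopen)
    (convex_halfSpace_re_gt _).isPreconnected (by norm_num) ?_ hs
  have : {s : ℂ | 2 < s.re} ∈ nhds (3 : ℂ) :=
    (isOpen_lt continuous_const continuous_re).mem_nhds (by norm_num)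
  filter_upwards [this] with w hw
  have hw' : 2 < w.re := hw
  rw [FF_eq_right χ w hw', hE' w]
  rintro rfl
  norm_num at hw'

lemma L_lower {q : ℕ} [NeZero q] (χ : DirichletCharacter ℂ q) (s : ℂ) (hs : s.re = 2) :
    1 / 4 ≤ ‖DirichletCharacter.LFunction χ s‖ := by
  have sA := summ_shift χ 0 le_rfl (-s) (by simp only [neg_re]; linarith)
  simp only [add_zero] at sA
  have hz : HasSum (fun n : ℕ => 1 / ((n : ℝ) + 1 + 1) ^ 2) (Real.pi ^ 2 / 6 - 1) := by
    have := (hasSum_nat_add_iff' 2).2 hasSum_zeta_two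
    simpa [Finset.sum_range_succ, add_assoc, one_add_one_eq_two] using this
  have hb : ‖∑' k : ℕ, χ ((k + 1 + 1 : ℕ) : ZMod q) * (((k + 1 : ℕ) + 1 : ℝ) : ℂ) ^ (-s)‖ ≤
      Real.pi ^ 2 / 6 - 1 := by
    refine tsum_of_norm_bounded hz fun k => ?_
    rw [norm_mul, norm_cpow_eq_rpow_re_of_pos (by positivity)]
    calc _ ≤ 1 * (((k + 1 : ℕ) : ℝ) + 1) ^ (-s).re := by gcongr; exact χ.norm_le_one _
      _ = _ := by
        rw [one_mul, neg_re, hs, Real.rpow_neg (by positivity), Real.rpow_two]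
        push_cast; simp
  rw [L_eq χ s (by linarith), sA.tsum_eq_zero_add]
  have h1 : χ ((0 + 1 : ℕ) : ZMod q) * (((0 : ℕ) + 1 : ℝ) : ℂ) ^ (-s) = 1 := by simp
  rw [h1]
  have hpi : Real.pi ^ 2 ≤ 10 := by
    nlinarith [Real.pi_lt_d2, Real.pi_pos]
  have := norm_sub_le_norm_add (1 : ℂ)
    (∑' k : ℕ, χ ((k + 1 + 1 : ℕ) : ZMod q) * (((k + 1 : ℕ) + 1 : ℝ) : ℂ) ^ (-s))
  rw [norm_one] at this
  linarith

/-- zero counting from Jensen -/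
lemma jensen_count {c : ℂ} {r R M : ℝ} {f : ℂ → ℂ} (r_pos : 0 < r)
    (r_lt_R : r < R) (hM : 1 ≤ M) (hf : AnalyticOnNhd ℂ f (Metric.closedBall c R))
    (hc : f c ≠ 0) (hb : ∀ z ∈ Metric.sphere c R, ‖f z‖ ≤ M) (S : Set ℂ)
    (hS : S ⊆ Metric.closedBall c r) (hS0 : ∀ z ∈ S, f z = 0) :
    S.Finite ∧ (Nat.card S : ℝ) ≤ Real.log (M / ‖f c‖) / Real.log (R / r) := by
  have hR : 0 < R := r_pos.trans r_lt_R
  have J := AnalyticOnNhd.sum_divisor_le (c := c) (r := r) (R := R) (M := M) (f := f)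
    (by rwa [abs_of_pos r_pos]) (by rwa [abs_of_pos r_pos, abs_of_pos hR]) hM
    (by rwa [abs_of_pos hR]) hc (by rwa [abs_of_pos hR])
  rw [abs_of_pos r_pos] at J
  have hfr : AnalyticOnNhd ℂ f (Metric.closedBall c r) :=
    hf.mono (Metric.closedBall_subset_closedBall r_lt_R.le)
  set D := MeromorphicOn.divisor f (Metric.closedBall c r) with hD
  have fin := D.finiteSupport (isCompact_closedBall c r)
  have hcmem : c ∈ Metric.closedBall c r := Metric.mem_closedBall_self r_pos.le
  have pos : ∀ z ∈ S, 1 ≤ D z := by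
    intro z hz
    rw [hD, MeromorphicOn.AnalyticOnNhd.divisor_apply hfr (hS hz)]
    have hne : analyticOrderAt f z ≠ ⊤ := by
      apply hfr.analyticOrderAt_ne_top_of_isPreconnected (x := c)
        (convex_closedBall c r).isPreconnected hcmem (hS hz)
      rw [(hfr c hcmem).analyticOrderAt_eq_zero.mpr hc]
      simp
    have h0 : analyticOrderAt f z ≠ 0 := by
      rw [Ne, (hfr z (hS hz)).analyticOrderAt_eq_zero]
      simpa using hS0 z hz
    obtain ⟨n, hn⟩ := ENat.ne_top_iff_exists.1 hne
    rw [← hn] at h0 ⊢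
    have : n ≠ 0 := by simpa using h0
    simp
    omega
  have nn : ∀ z, 0 ≤ D z := fun z => (MeromorphicOn.AnalyticOnNhd.divisor_nonneg hfr) z
  have sub : S ⊆ D.support := fun z hz => by
    have := pos z hz
    simp only [Function.mem_support]; omega
  have Sf : S.Finite := fin.subset sub
  refine ⟨Sf, le_trans ?_ J⟩
  rw [finsum_eq_sum _ fin]
  have : ((Nat.card S : ℕ) : ℤ) ≤ ∑ z ∈ fin.toFinset, D z := by
    calc ((Nat.card S : ℕ) : ℤ) = ∑ z ∈ Sf.toFinset, 1 := by
          rw [Nat.card_coe_set_eq, Set.ncard_eq_toFinset_card S Sf]; simp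
      _ ≤ ∑ z ∈ Sf.toFinset, D z := Finset.sum_le_sum fun z hz => pos z (by simpa using hz)
      _ ≤ _ := Finset.sum_le_sum_of_subset_of_nonneg
          (by simpa using sub) (fun z _ _ => nn z)
  exact_mod_cast this

lemma count_bound : ∃ C : ℝ, 0 < C ∧ ∀ (q : ℕ) [NeZero q] (χ : DirichletCharacter ℂ q) (t : ℝ),
    0 ≤ t →
    ({ρ : ℂ | DirichletCharacter.LFunction χ ρ = 0 ∧ 0 < ρ.re ∧ ρ.re < 1 ∧
              t < ρ.im ∧ ρ.im ≤ t + 1}).Finite ∧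
          (Nat.card {ρ : ℂ | DirichletCharacter.LFunction χ ρ = 0 ∧ 0 < ρ.re ∧ ρ.re < 1 ∧
              t < ρ.im ∧ ρ.im ≤ t + 1} : ℝ) ≤ C * Real.log ((q : ℝ) * (t + 2)) := by
  obtain ⟨Z, hZ1, hZ⟩ := FF_bound
  have hl : 0 < Real.log (2.4 / 2.1) := Real.log_pos (by norm_num)
  have hl2 : 0 < Real.log 2 := Real.log_pos (by norm_num)
  have hK : 0 < Real.log (108 * Z) := Real.log_pos (by linarith)
  refine ⟨(Real.log (108 * Z) / Real.log 2 + 3) / Real.log (2.4 / 2.1), by positivity, ?_⟩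
  intro q _ χ t ht
  have hq1 : 1 ≤ q := NeZero.one_le
  have hq : (1 : ℝ) ≤ q := by exact_mod_cast hq1
  set c : ℂ := ⟨2, t + 1 / 2⟩ with hc
  have hcn : ‖c‖ ≤ 2 + (t + 1 / 2) := by
    refine (norm_le_abs_re_add_abs_im c).trans ?_
    simp only [hc]
    rw [abs_of_pos (by norm_num), abs_of_pos (by positivity)]
  have hX : (2 : ℝ) ≤ q * (t + 2) := by nlinarith
  set X := (q : ℝ) * (t + 2) with hXdef
  have re_of : ∀ z ∈ Metric.closedBall c (2.4 : ℝ), -1 / 2 < z.re := by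
    intro z hz
    have h1 := (abs_re_le_norm (z - c)).trans (mem_closedBall_iff_norm.1 hz)
    have h2 := (abs_le.1 h1).1
    simp only [sub_re, hc] at h2
    norm_num at h2 ⊢
    linarith
  have hlow : 1 / 4 ≤ ‖FF χ c‖ := by
    rw [FF_eq χ c (by simp only [hc]; norm_num) (by
      intro h; have := congrArg re h; simp [hc] at this), norm_mul]
    have h1 : 1 ≤ ‖c - 1‖ := by
      refine le_trans ?_ (abs_re_le_norm _)
      simp only [hc, sub_re, one_re]; norm_num
    have h2 := L_lower χ c rfl
    nlinarith
  have hM1 : 1 ≤ 27 * Z * X ^ 3 := by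
    have : 1 ≤ X ^ 3 := one_le_pow₀ (by linarith)
    nlinarith
  obtain ⟨h1, h2⟩ := jensen_count (c := c) (r := 2.1) (R := 2.4) (M := 27 * Z * X ^ 3)
    (f := FF χ) (by norm_num) (by norm_num) hM1
    (fun z hz => ((FF_diff hq1 χ).analyticOnNhd
      (isOpen_lt continuous_const continuous_re)) z (re_of z hz))
    (norm_pos_iff.1 (by linarith)) (fun z hz => by
      have hz' := Metric.sphere_subset_closedBall hz
      refine (hZ q hq1 χ z (re_of z hz')).trans ?_
      have hzn : ‖z‖ + 1 ≤ 3 * (t + 2) := by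
        have h1 := mem_closedBall_iff_norm.1 hz'
        have h2 : ‖z‖ ≤ ‖z - c‖ + ‖c‖ := by simpa using norm_add_le (z - c) c
        norm_num at h1
        linarith
      calc _ ≤ Z * ((q : ℝ) * (3 * (t + 2))) ^ 3 := by gcongr
        _ = _ := by rw [hXdef]; ring)
    {ρ : ℂ | DirichletCharacter.LFunction χ ρ = 0 ∧ 0 < ρ.re ∧ ρ.re < 1 ∧
              t < ρ.im ∧ ρ.im ≤ t + 1}
    (fun ρ hρ => by
      obtain ⟨-, h1, h2, h3, h4⟩ := hρ
      rw [mem_closedBall_iff_norm, ← abs_of_nonneg (norm_nonneg (ρ - c))]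
      apply abs_le_of_sq_le_sq _ (by norm_num)
      rw [← normSq_eq_norm_sq, normSq_apply]
      simp only [sub_re, sub_im, hc]
      nlinarith)
    (fun ρ hρ => by
      obtain ⟨h0, h1, h2, h3, h4⟩ := hρ
      rw [FF_eq χ ρ (by linarith) (by rintro rfl; simp at h2), h0, mul_zero])
  refine ⟨h1, h2.trans ?_⟩
  rw [div_mul_eq_mul_div]
  gcongr
  have hXlog : Real.log 2 ≤ Real.log X := Real.log_le_log (by norm_num) hX
  calc Real.log (27 * Z * X ^ 3 / ‖FF χ c‖) ≤ Real.log (27 * Z * X ^ 3 / (1 / 4)) := by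
        apply Real.log_le_log
        · have : 0 < ‖FF χ c‖ := by linarith
          positivity
        · gcongr
    _ = Real.log (108 * Z * X ^ 3) := by congr 1; ring
    _ = Real.log (108 * Z) + 3 * Real.log X := by
        rw [Real.log_mul (by positivity) (by positivity), Real.log_pow]; norm_num
    _ ≤ (Real.log (108 * Z) / Real.log 2) * Real.log X + 3 * Real.log X := by
        gcongr
        rw [div_mul_eq_mul_div, le_div_iff₀ hl2]
        gcongr
    _ = _ := by ring

lemma pigeon (S : Finset ℝ) (T : ℝ) :
    ∃ t ∈ Ioc T (T + 1), ∀ y : ℝ, (y ∈ Ioc T (T + 1) → y ∈ S) →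
      1 / (2 * ((S.card : ℝ) + 1)) ≤ |t - y| := by
  set N := S.card
  set h : ℝ := 1 / ((N : ℝ) + 1) with hh
  have hN : (0 : ℝ) < (N : ℝ) + 1 := by positivity
  have hpos : 0 < h := by positivity
  have hNh : ((N : ℝ) + 1) * h = 1 := by rw [hh]; field_simp
  have hhalf : 1 / (2 * ((N : ℝ) + 1)) = h / 2 := by rw [hh]; field_simp
  obtain ⟨k, hk, hfree⟩ : ∃ k ∈ Finset.range (N + 1), ∀ y ∈ S,
      ¬ (T + k * h < y ∧ y < T + (k + 1) * h) := by
    by_contra! hcon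
    choose! f hf using hcon
    have : (Finset.range (N + 1)).card ≤ S.card :=
      Finset.card_le_card_of_injOn f (fun k hk => (hf k hk).1) (by
        intro a ha b hb hab
        have h1 := (hf a ha).2
        have h2 := (hf b hb).2
        rw [hab] at h1
        have e1 : (a : ℝ) < b + 1 := by
          by_contra! hc
          nlinarith [h1.1, h2.2]
        have e2 : (b : ℝ) < a + 1 := by
          by_contra! hc
          nlinarith [h1.2, h2.1]
        have e1' : a < b + 1 := by exact_mod_cast e1
        have e2' : b < a + 1 := by exact_mod_cast e2
        omega)
    rw [Finset.card_range] at this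
    omega
  have hkN : (k : ℝ) + 1 ≤ N + 1 := by exact_mod_cast Finset.mem_range.1 hk
  have hk0 : (0 : ℝ) ≤ k * h := by positivity
  have htop : ((k : ℝ) + 1) * h ≤ 1 := by
    have := mul_le_mul_of_nonneg_right hkN hpos.le
    linarith
  refine ⟨T + (k + 1 / 2) * h, ⟨by nlinarith, by nlinarith⟩, fun y hy => ?_⟩
  rw [hhalf]
  by_contra! hlt
  obtain ⟨l1, l2⟩ := abs_lt.1 hlt
  have y1 : T + k * h < y := by linarith
  have y2 : y < T + (k + 1) * h := by linarith
  exact hfree y (hy ⟨by linarith, by linarith⟩) ⟨y1, y2⟩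

end ZD



/-- For `q ≥ 1`, a Dirichlet character `χ` mod `q`, and `t ≥ 0`, the number of
nontrivial zeros `ρ = β + iγ` of `L(s,χ)` with `0 < β < 1` and `t < γ ≤ t+1` is
`O(log(q(t+2)))`; consequently, for any `T₀ ≥ 0` there is `t ∈ (T₀, T₀+1]` whose
distance to every zero ordinate is `≫ 1/log(q(t+2))`. -/
theorem zero_density_and_gap :
    ∃ C c : ℝ, 0 < C ∧ 0 < c ∧
      ∀ (q : ℕ) [NeZero q] (χ : DirichletCharacter ℂ q),
        (∀ t : ℝ, 0 ≤ t →
          ({ρ : ℂ | DirichletCharacter.LFunction χ ρ = 0 ∧ 0 < ρ.re ∧ ρ.re < 1 ∧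
              t < ρ.im ∧ ρ.im ≤ t + 1}).Finite ∧
          (Nat.card {ρ : ℂ | DirichletCharacter.LFunction χ ρ = 0 ∧ 0 < ρ.re ∧ ρ.re < 1 ∧
              t < ρ.im ∧ ρ.im ≤ t + 1} : ℝ) ≤ C * Real.log ((q : ℝ) * (t + 2))) ∧
        (∀ T₀ : ℝ, 0 ≤ T₀ → ∃ t : ℝ, t ∈ Set.Ioc T₀ (T₀ + 1) ∧
          ∀ ρ : ℂ, DirichletCharacter.LFunction χ ρ = 0 → 0 < ρ.re → ρ.re < 1 →
            c / Real.log ((q : ℝ) * (t + 2)) ≤ |t - ρ.im|) := by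
  obtain ⟨C, hC, H⟩ := ZD.count_bound
  refine ⟨C, 1 / (2 * C + 4), hC, by positivity, ?_⟩
  intro q _ χ
  refine ⟨H q χ, fun T hT => ?_⟩
  obtain ⟨hfin, hcard⟩ := H q χ T hT
  obtain ⟨t, ht, hgap⟩ := ZD.pigeon (hfin.toFinset.image Complex.im) T
  refine ⟨t, ht, fun ρ h0 h1 h2 => ?_⟩
  refine le_trans ?_ (hgap ρ.im fun hy => ?_)
  · have hq : (1 : ℝ) ≤ q := by exact_mod_cast (NeZero.one_le : 1 ≤ q)
    have hX : (2 : ℝ) ≤ q * (T + 2) := by nlinarith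
    have hXt : (q : ℝ) * (T + 2) ≤ q * (t + 2) := by
      have := ht.1.le
      gcongr
    have l1 : Real.log 2 ≤ Real.log (q * (T + 2)) := Real.log_le_log (by norm_num) hX
    have l2 : Real.log (q * (T + 2)) ≤ Real.log (q * (t + 2)) :=
      Real.log_le_log (by linarith) hXt
    have l3 := Real.log_two_gt_d9
    have hcard2 : ((hfin.toFinset.image Complex.im).card : ℝ) ≤
        C * Real.log ((q : ℝ) * (T + 2)) := by
      refine le_trans ?_ hcard
      rw [Nat.card_coe_set_eq, Set.ncard_eq_toFinset_card _ hfin]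
      exact_mod_cast Finset.card_image_le
    rw [div_div]
    apply one_div_le_one_div_of_le (by positivity)
    have l4 := mul_le_mul_of_nonneg_left l2 hC.le
    nlinarith
  · rw [Finset.mem_image]
    exact ⟨ρ, by simpa using ⟨h0, h1, h2, hy.1, hy.2⟩, rfl⟩
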